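/- arXiv:math/0201154 — 2 statements merged into one kernel-verified Lean document; each statement's English description precedes it below -/
import Mathlib

section
/- Let a, b, e be nonnegative integers, m a positive integer, and c_1, d_1, c_2 ∈ ℚ_2. If the polynomial f(x) = c_2·x^a·(c_1·x^b + d_1·x^e)^m is not identically zero, then f has at most 3 distinct roots in ℚ_2. -/
open Polynomial

lemma int_odd_root (u : ℤ_[2]) (k : ℕ) (hk : k % 2 = 1) (h : u ^ k = 1) : u = 1 := by
  have hz : (PadicInt.toZMod u) ^ k = 1 := by rw [← map_pow, h, map_one]
  have h1 : PadicInt.toZMod u = 1 := by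
    have key : ∀ z : ZMod 2, z = 0 ∨ z = 1 := by decide
    rcases key (PadicInt.toZMod u) with h0 | h0
    · rw [h0, zero_pow (by omega)] at hz
      exact absurd hz (by decide)
    · exact h0
  have hg := mul_geom_sum u k
  rw [h, sub_self, mul_eq_zero] at hg
  rcases hg with hg | hg
  · exact sub_eq_zero.mp hg
  · exfalso
    have := congrArg PadicInt.toZMod hg
    simp only [map_sum, map_pow, h1, one_pow, map_zero] at this
    simp only [Finset.sum_const, Finset.card_range, nsmul_eq_mul, mul_one] at this
    rw [ZMod.natCast_eq_zero_iff] at this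
    omega

lemma int_root (u : ℤ_[2]) (n : ℕ) (hn : 0 < n) (h : u ^ n = 1) : u = 1 ∨ u = -1 := by
  induction n using Nat.strong_induction_on with
  | _ n ih =>
    rcases Nat.mod_two_eq_zero_or_one n with h2 | h2
    · obtain ⟨k, rfl⟩ : ∃ k, n = k * 2 := ⟨n / 2, by omega⟩
      rw [pow_mul, sq_eq_one_iff] at h
      rcases h with h | h
      · exact ih k (by omega) (by omega) h
      · rcases Nat.mod_two_eq_zero_or_one k with h3 | h3
        · exfalso
          obtain ⟨j, rfl⟩ : ∃ j, k = j * 2 := ⟨k / 2, by omega⟩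
          rw [pow_mul] at h
          have h4 := congrArg (PadicInt.toZModPow (p := 2) 2) h
          rw [map_pow, map_neg, map_one] at h4
          have key : ∀ z : ZMod (2 ^ 2), z ^ 2 ≠ -1 := by decide
          exact key _ h4
        · right
          have := int_odd_root (-u) k h3 (by
            rw [Odd.neg_pow (Nat.odd_iff.mpr h3), h, neg_neg])
          rw [← this, neg_neg]
    · exact Or.inl (int_odd_root u n h2 h)

lemma padic_root (u : ℚ_[2]) (n : ℕ) (hn : 0 < n) (h : u ^ n = 1) : u = 1 ∨ u = -1 := by
  have hu : ‖u‖ = 1 := by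
    have : ‖u‖ ^ n = 1 := by rw [← norm_pow, h, norm_one]
    exact (pow_eq_one_iff_of_nonneg (norm_nonneg _) (by omega)).mp this
  have := int_root ⟨u, hu.le⟩ n hn (by
    apply Subtype.ext
    exact (PadicInt.coe_pow _ n).trans h)
  rcases this with h | h
  · left; simpa using congrArg (fun z : ℤ_[2] => (z : ℚ_[2])) h
  · right; simpa using congrArg (fun z : ℤ_[2] => (z : ℚ_[2])) h

lemma padic_root2 (u : ℚ_[2]) (b e : ℕ) (hu : u ≠ 0) (hbe : b ≠ e) (h : u ^ b = u ^ e) :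
    u = 1 ∨ u = -1 := by
  wlog hlt : b < e generalizing b e
  · exact this e b hbe.symm h.symm (by omega)
  obtain ⟨k, rfl⟩ := Nat.exists_eq_add_of_lt hlt
  refine padic_root u (k + 1) (by omega) ?_
  have h0 : u ^ b ≠ 0 := pow_ne_zero _ hu
  rw [add_assoc, pow_add] at h
  exact (mul_eq_left₀ h0).mp h.symm

theorem twoadic_root_count_explicit_sigma_one_example
    (a b e : ℕ) (m : ℕ) (hm : 1 ≤ m) (c₁ d₁ c₂ : ℚ_[2])
    (f : Polynomial ℚ_[2])
    (hfdef : f = C c₂ * X ^ a * (C c₁ * X ^ b + C d₁ * X ^ e) ^ m)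
    (hf : f ≠ 0) :
    {x : ℚ_[2] | f.eval x = 0}.ncard ≤ 3 := by
  have hc2 : c₂ ≠ 0 := by rintro rfl; apply hf; simp [hfdef]
  have hg : C c₁ * X ^ b + C d₁ * X ^ e ≠ 0 := by
    intro h; apply hf; rw [hfdef, h, zero_pow (by omega), mul_zero]
  have hroot : ∀ x : ℚ_[2], x ≠ 0 → f.eval x = 0 → c₁ * x ^ b + d₁ * x ^ e = 0 := by
    intro x hx h
    rw [hfdef] at h
    simp only [eval_mul, eval_C, eval_pow, eval_X, eval_add] at h
    rcases mul_eq_zero.mp h with h | h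
    · exact absurd h (mul_ne_zero hc2 (pow_ne_zero _ hx))
    · exact eq_zero_of_pow_eq_zero h
  obtain ⟨y, hy⟩ : ∃ y : ℚ_[2], {x : ℚ_[2] | f.eval x = 0} ⊆ {0, y, -y} := by
    by_cases hex : ∃ y : ℚ_[2], y ≠ 0 ∧ f.eval y = 0
    · obtain ⟨y, hy0, hy⟩ := hex
      refine ⟨y, fun x hx => ?_⟩
      by_cases hx0 : x = 0
      · simp [hx0]
      have ey := hroot y hy0 hy
      have ex := hroot x hx0 hx
      have yb := pow_ne_zero b hy0
      have ye := pow_ne_zero e hy0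
      have hd : d₁ ≠ 0 := by
        rintro rfl
        have : c₁ = 0 := by simpa [yb, hy0] using ey
        apply hg; simp [this]
      have hbe : b ≠ e := by
        rintro rfl
        rw [← add_mul] at ey
        have h0 := (mul_eq_zero.mp ey).resolve_right yb
        apply hg; rw [← add_mul, ← C_add, h0]; simp
      have key : (x / y) ^ b = (x / y) ^ e := by
        rw [div_pow, div_pow, div_eq_div_iff yb ye]
        have hc : c₁ ≠ 0 := by
          rintro rfl
          apply hd
          simpa [ye, hy0] using ey
        apply mul_left_cancel₀ hc
        apply mul_left_cancel₀ hd
        linear_combination d₁ * y ^ e * ex - d₁ * x ^ e * ey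
      rcases padic_root2 _ b e (div_ne_zero hx0 hy0) hbe key with h | h
      · rw [div_eq_iff hy0] at h; simp [h]
      · rw [div_eq_iff hy0] at h; simp [h]
    · push Not at hex
      refine ⟨0, fun x hx => ?_⟩
      by_cases hx0 : x = 0
      · simp [hx0]
      · exact absurd hx (hex x hx0)
  calc _ ≤ ({0, y, -y} : Set ℚ_[2]).ncard := Set.ncard_le_ncard hy (by simp)
    _ ≤ 3 := by
      have h1 := Set.ncard_insert_le (0 : ℚ_[2]) {y, -y}
      have h2 := Set.ncard_insert_le y {-y}
      rw [Set.ncard_singleton] at h2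
      omega
end

section
/- Let L be a field of characteristic zero and let f ∈ ℤ[x] be computed by a straight-line program of length N, i.e., there is a sequence (f_0, …, f_N) in ℤ[x] with f_0 = 1, f_1 = x, f_N = f, and each f_i (2 ≤ i ≤ N) a sum, difference, or product of two earlier terms. Then f, viewed as a polynomial over L, admits an additive-complexity-s presentation over L for some s ≤ N; in particular σ_L(f) ≤ τ(f). -/
open Polynomial

/-- `g 0, g 1, …, g N` is a straight-line program: `g 0 = 1`, `g 1 = x`, and each
subsequent term is a sum, difference, or product of two earlier terms. -/
def IsSLP (g : ℕ → Polynomial ℤ) (N : ℕ) : Prop :=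
  g 0 = 1 ∧ g 1 = X ∧
  ∀ i, 2 ≤ i → i ≤ N → ∃ j k, j < i ∧ k < i ∧
    (g i = g j + g k ∨ g i = g j - g k ∨ g i = g j * g k)

/-- `τ(f)`: the least `N - 1` such that some straight-line program
`(g 0, …, g N)` computes `f`, i.e. `g N = f`. -/
noncomputable def tau (f : Polynomial ℤ) : ℕ :=
  sInf {t | ∃ g : ℕ → Polynomial ℤ, IsSLP g (t + 1) ∧ g (t + 1) = f}

/-- `f` admits a presentation of additive complexity `s` over `L`. -/
def HasAddComplexityPres {L : Type*} [Field L] (f : L[X]) (s : ℕ) : Prop :=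
  ∃ (c d : ℕ → L) (m m' : ℕ → ℕ → ℕ) (Xs : ℕ → L[X]),
    Xs 0 = X ∧
    (∀ j, 1 ≤ j → j ≤ s →
      Xs j = C (c j) * ∏ i ∈ Finset.range j, Xs i ^ m i j
           + C (d j) * ∏ i ∈ Finset.range j, Xs i ^ m' i j) ∧
    f = C (c (s+1)) * ∏ i ∈ Finset.range (s+1), Xs i ^ m i (s+1)

/-- The additive complexity `σ_L(f)`: the least `s` admitting such a presentation. -/
noncomputable def addComplexity {L : Type*} [Field L] (f : L[X]) : ℕ :=
  sInf {s | HasAddComplexityPres f s}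


theorem slp_prod_aux (L : Type*) [Field L] (g : ℕ → Polynomial ℤ) (h0 : g 0 = 1)
    (a j : ℕ) (ha : a < j + 1) :
    ∏ i ∈ Finset.range j,
      ((g (i + 1)).map (Int.castRingHom L)) ^ (if i + 1 = a then 1 else 0)
      = (g a).map (Int.castRingHom L) := by
  cases a with
  | zero => simp [h0]
  | succ b =>
    have hb : b < j := by omega
    simp [pow_ite, Finset.prod_ite_eq', hb]

theorem slp_pres (L : Type*) [Field L] (t : ℕ) (g : ℕ → Polynomial ℤ)
    (hslp : IsSLP g (t + 1)) :
    HasAddComplexityPres ((g (t + 1)).map (Int.castRingHom L)) t := by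
  obtain ⟨h0, h1, h2⟩ := hslp
  have key : ∀ j : ℕ, ∃ (c d : L) (m m' : ℕ → ℕ),
      (1 ≤ j → j ≤ t → (g (j + 1)).map (Int.castRingHom L)
        = C c * ∏ i ∈ Finset.range j, ((g (i + 1)).map (Int.castRingHom L)) ^ m i
        + C d * ∏ i ∈ Finset.range j, ((g (i + 1)).map (Int.castRingHom L)) ^ m' i) ∧
      (j = t + 1 → (g (t + 1)).map (Int.castRingHom L)
        = C c * ∏ i ∈ Finset.range (t + 1), ((g (i + 1)).map (Int.castRingHom L)) ^ m i) := by
    intro j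
    by_cases hj : 1 ≤ j ∧ j ≤ t
    · obtain ⟨a, b, ha, hb, h⟩ := h2 (j + 1) (by omega) (by omega)
      rcases h with h | h | h
      · refine ⟨1, 1, fun i => if i + 1 = a then 1 else 0, fun i => if i + 1 = b then 1 else 0,
          fun _ _ => ?_, fun h' => by omega⟩
        rw [slp_prod_aux L g h0 a j ha, slp_prod_aux L g h0 b j hb, h]
        simp
      · refine ⟨1, -1, fun i => if i + 1 = a then 1 else 0, fun i => if i + 1 = b then 1 else 0,
          fun _ _ => ?_, fun h' => by omega⟩
        rw [slp_prod_aux L g h0 a j ha, slp_prod_aux L g h0 b j hb, h]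
        simp [sub_eq_add_neg]
      · refine ⟨1, 0, fun i => (if i + 1 = a then 1 else 0) + (if i + 1 = b then 1 else 0),
          fun _ => 0, fun _ _ => ?_, fun h' => by omega⟩
        simp only [pow_add, Finset.prod_mul_distrib]
        rw [slp_prod_aux L g h0 a j ha, slp_prod_aux L g h0 b j hb, h]
        simp
    · refine ⟨1, 0, fun i => if i + 1 = t + 1 then 1 else 0, fun _ => 0,
        fun h h' => absurd ⟨h, h'⟩ hj, fun _ => ?_⟩
      rw [slp_prod_aux L g h0 (t + 1) (t + 1) (by omega)]
      simp
  choose c d m m' hk using key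
  refine ⟨c, d, fun i j => m j i, fun i j => m' j i,
    fun i => (g (i + 1)).map (Int.castRingHom L), ?_, ?_, ?_⟩
  · simp [h1]
  · intro j hj hj'
    exact (hk j).1 hj hj'
  · exact (hk (t + 1)).2 rfl

theorem addComplexity_le_tau
    (L : Type*) [Field L] [CharZero L]
    (f : Polynomial ℤ) (N : ℕ) (g : ℕ → Polynomial ℤ)
    (hslp : IsSLP g N) (hgN : g N = f) :
    (∃ s ≤ N, HasAddComplexityPres (f.map (Int.castRingHom L)) s) ∧
    addComplexity (f.map (Int.castRingHom L)) ≤ tau f := by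
  have hne : ∃ t, t ≤ N + 1 ∧ (1 ≤ N → t ≤ N) ∧
      ∃ g : ℕ → Polynomial ℤ, IsSLP g (t + 1) ∧ g (t + 1) = f := by
    cases N with
    | succ t => exact ⟨t, by omega, by omega, g, hslp, hgN⟩
    | zero =>
      refine ⟨1, by omega, by omega, fun i => if i = 1 then X else 1, ⟨by simp, by simp, ?_⟩, ?_⟩
      · intro i hi hi'
        refine ⟨0, 0, by omega, by omega, Or.inr (Or.inr ?_)⟩
        have : i ≠ 1 := by omega
        simp [this]
      · rw [← hgN, hslp.1]
        simp
  constructor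
  · rcases Nat.eq_zero_or_pos N with hN | hN
    · subst hN
      refine ⟨0, le_rfl, 1, 0, 0, 0, fun _ => X, rfl, fun j h h' => by omega, ?_⟩
      rw [← hgN, hslp.1]
      simp
    · obtain ⟨t, _, ht, g', hg', rfl⟩ := hne
      exact ⟨t, ht hN, slp_pres L t g' hg'⟩
  · obtain ⟨t, _, _, ht⟩ := hne
    have hmem : tau f ∈ {t | ∃ g : ℕ → Polynomial ℤ, IsSLP g (t + 1) ∧ g (t + 1) = f} :=
      Nat.sInf_mem ⟨t, ht⟩
    obtain ⟨g', hg', hf⟩ := hmem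
    apply Nat.sInf_le
    have := slp_pres L (tau f) g' hg'
    rw [hf] at this
    exact this
end
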